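/- arXiv:1710.03415 — 3 statements merged into one kernel-verified Lean document; each statement's English description precedes it below -/
import Mathlib

section
/- Let h₁/k₁ < h₂/k₂ be irreducible fractions with h₂k₁ − h₁k₂ = 1 (i.e., consecutive fractions in some Farey sequence). Then the Ford circles C(h₁/k₁) and C(h₂/k₂) are tangent to each other, and their point of tangency is (h₁k₁ + h₂k₂ + i)/(k₁² + k₂²). -/
/-!
The difference of the centers has real part `-1/(k₁k₂)` (this is where `h₂k₁ - h₁k₂ = 1` enters) and
imaginary part `(k₁⁻² - k₂⁻²)/2`, so its squared modulus is `((k₁⁻² + k₂⁻²)/2)²`, the square of the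
sum of the radii. In a strictly convex space two spheres whose centers are at distance `r + s` meet
only in the point dividing the segment between the centers in the ratio `r : s`
(`sphere_inter_sphere_of_dist_eq_add`); here that ratio is `k₂² : k₁²`, which gives the stated point.
-/

open Complex

noncomputable section

/-- The Ford circle `C(h/k)`: the circle in the upper half-plane with center
`h/k + i/(2k²)` and radius `1/(2k²)`. -/
def fordCircle (h : ℤ) (k : ℕ) : Set ℂ :=
  Metric.sphere ((h : ℂ) / k + Complex.I / (2 * (k : ℂ) ^ 2)) (1 / (2 * (k : ℝ) ^ 2))

/-- Externally tangent spheres in `ℂ` meet exactly in the point that divides the segment between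
their centers in the ratio of the radii. -/
theorem sphere_inter_sphere_of_dist_eq_add {a b : ℂ} {r s : ℝ} (hr : 0 < r) (hs : 0 < s)
    (hab : dist a b = r + s) :
    Metric.sphere a r ∩ Metric.sphere b s = {AffineMap.lineMap a b (r / (r + s))} := by
  have hrs : r + s ≠ 0 := by positivity
  have h1 : r / (r + s) * dist a b = r := by rw [hab]; field_simp
  have h2 : (1 - r / (r + s)) * dist a b = s := by rw [hab]; field_simp; ring
  have h2' : 0 ≤ 1 - r / (r + s) := by
    rw [sub_nonneg, div_le_one (by positivity)]; linarith
  ext z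
  simp only [Set.mem_inter_iff, Metric.mem_sphere, Set.mem_singleton_iff]
  constructor
  · rintro ⟨hza, hzb⟩
    exact eq_lineMap_of_dist_eq_mul_of_dist_eq_mul (by rw [dist_comm, hza, h1]) (by rw [hzb, h2])
  · rintro rfl
    rw [dist_lineMap_left, dist_lineMap_right, Real.norm_of_nonneg (by positivity),
      Real.norm_of_nonneg h2']
    exact ⟨h1, h2⟩

theorem fordCircle_center_eq_mk (h : ℤ) (k : ℕ) :
    (h : ℂ) / k + Complex.I / (2 * (k : ℂ) ^ 2) = ⟨(h : ℝ) / k, 1 / (2 * (k : ℝ) ^ 2)⟩ := by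
  rw [Complex.mk_eq_add_mul_I]
  push_cast
  ring

/-- **Lemma (tangency of Ford circles).** If `h₁/k₁ < h₂/k₂` are irreducible fractions with
`h₂k₁ - h₁k₂ = 1`, then the Ford circles `C(h₁/k₁)` and `C(h₂/k₂)` are tangent (the distance
between their centers equals the sum of their radii), and their unique common point is
`(h₁k₁ + h₂k₂ + i)/(k₁² + k₂²)`. -/
theorem fordCircle_tangent
    (h₁ h₂ : ℤ) (k₁ k₂ : ℕ) (hk₁ : 0 < k₁) (hk₂ : 0 < k₂)
    (hcop₁ : Int.gcd h₁ (k₁ : ℤ) = 1) (hcop₂ : Int.gcd h₂ (k₂ : ℤ) = 1)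
    (hlt : (h₁ : ℚ) / k₁ < (h₂ : ℚ) / k₂)
    (huni : h₂ * k₁ - h₁ * k₂ = 1) :
    dist ((h₁ : ℂ) / k₁ + Complex.I / (2 * (k₁ : ℂ) ^ 2))
        ((h₂ : ℂ) / k₂ + Complex.I / (2 * (k₂ : ℂ) ^ 2))
      = 1 / (2 * (k₁ : ℝ) ^ 2) + 1 / (2 * (k₂ : ℝ) ^ 2) ∧
    fordCircle h₁ k₁ ∩ fordCircle h₂ k₂ =
      {((h₁ : ℂ) * k₁ + (h₂ : ℂ) * k₂ + Complex.I) / ((k₁ : ℂ) ^ 2 + (k₂ : ℂ) ^ 2)} := by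
  have hk₁' : (0 : ℝ) < k₁ := by exact_mod_cast hk₁
  have hk₂' : (0 : ℝ) < k₂ := by exact_mod_cast hk₂
  have hR : (h₂ : ℝ) * k₁ - h₁ * k₂ = 1 := by exact_mod_cast huni
  have hdist : dist ((h₁ : ℂ) / k₁ + Complex.I / (2 * (k₁ : ℂ) ^ 2))
        ((h₂ : ℂ) / k₂ + Complex.I / (2 * (k₂ : ℂ) ^ 2))
      = 1 / (2 * (k₁ : ℝ) ^ 2) + 1 / (2 * (k₂ : ℝ) ^ 2) := by
    have hx : (h₁ : ℝ) / k₁ - h₂ / k₂ = -(1 / (k₁ * k₂)) := by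
      field_simp
      linear_combination -hR
    rw [fordCircle_center_eq_mk, fordCircle_center_eq_mk, Complex.dist_mk, hx,
      Real.sqrt_eq_iff_mul_self_eq (by positivity) (by positivity)]
    field_simp
    ring
  refine ⟨hdist, ?_⟩
  unfold fordCircle
  rw [sphere_inter_sphere_of_dist_eq_add (by positivity) (by positivity) hdist]
  have ht : 1 / (2 * (k₁ : ℝ) ^ 2) / (1 / (2 * (k₁ : ℝ) ^ 2) + 1 / (2 * (k₂ : ℝ) ^ 2))
      = (k₂ : ℝ) ^ 2 / ((k₁ : ℝ) ^ 2 + (k₂ : ℝ) ^ 2) := by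
    field_simp
    ring
  have hC₁ : (k₁ : ℂ) ≠ 0 := by exact_mod_cast hk₁.ne'
  have hC₂ : (k₂ : ℂ) ≠ 0 := by exact_mod_cast hk₂.ne'
  have hS : (k₁ : ℂ) ^ 2 + (k₂ : ℂ) ^ 2 ≠ 0 := by
    have : k₁ ^ 2 + k₂ ^ 2 ≠ 0 := by positivity
    exact_mod_cast this
  rw [ht, AffineMap.lineMap_apply_module', Complex.real_smul]
  congr 1
  push_cast
  field_simp
  ring
end
end

section
/- Let c₁ > 0 be real, n > n₀ real, k ≥ 1 an integer, and c₃(k) real, and consider the contour integral I = ∮ z^{c₁} exp[ 2π(n−n₀)z/k² + (π/12)c₃(k)/z ] dz taken over the circle |z − 1/2| = 1/2 traversed clockwise (with z^{c₁} the principal branch). If c₃(k) ≤ 0 then I = 0, and if c₃(k) > 0 then I = −2πi ( k √( c₃(k)/(24(n−n₀)) ) )^{c₁+1} · I_{1+c₁}[ (π/k) √( (2/3) c₃(k)(n−n₀) ) ], where I_{1+c₁} is the modified Bessel function of the first kind of order 1+c₁. -/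
/-!
The substitution `z = 1 / s` maps the circle `|z - 1/2| = 1/2` to the vertical line `Re s = 1`.
With `A = 2π(n - n₀)/k²` and `B = πc₃ₖ/12`, the circle integral becomes
`-∫ s ^ (-c₁ - 2) exp (A / s + B s) ds`, taken upwards (`circle_integral_eq_vertical`; the
substitution is carried out on parameters, as `θ = 2 arctan t` with `s = 1 + i t`).

Since `|1 / s| ≤ 1` and `|exp (B s)|` is constant on the line, `exp (A / s)` may be expanded and
integrated term by term (`hasSum_integral_vertical`). Each term is Laplace's integral
`∫ s ^ (-a) exp (B s) ds`, equal to `2πi B ^ (a - 1) / Γ(a)` for `B > 0` and to `0` for `B ≤ 0`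
(`integral_cpow_mul_cexp_vertical`). Both signs of `B` come at once from Fourier inversion: the
function equal to `x ^ (a - 1) exp (-x)` for `x > 0` and to `0` for `x ≤ 0` is continuous and
integrable when `a > 1`, and its Fourier transform `Γ(a) (1 + 2πiw) ^ (-a)` is integrable.

For `c₃ₖ ≤ 0` every term thus vanishes; for `c₃ₖ > 0` the sum is the series of the Bessel function
at `2√(AB)`, multiplied by `√(B/A) ^ (c₁ + 1)` (`bessel_term`).
-/

open Complex Real

noncomputable section

/-- The modified Bessel function of the first kind of order `ν`. -/
def besselI (ν x : ℝ) : ℝ :=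
  ∑' j : ℕ, (x / 2) ^ (2 * (j : ℝ) + ν) / (Real.Gamma (j + ν + 1) * (Nat.factorial j))

open MeasureTheory Set Filter Topology

/-! ### Euler's integral with a complex rate -/

/-- Euler's integral with a complex rate `s`. The real case is in Mathlib; both sides are
holomorphic on the right half-plane (the left side is the complex moment generating function of
the measure `x ^ (a - 1) dx` on `(0, ∞)`), so the identity theorem extends it. -/
lemma integral_rpow_mul_cexp_neg_mul_Ioi {a : ℝ} (ha : 0 < a) {s : ℂ} (hs : 0 < s.re) :
    ∫ x in Ioi (0 : ℝ), ((x ^ (a - 1) : ℝ) : ℂ) * Complex.exp (-(s * x))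
      = s ^ (-(a : ℂ)) * (Real.Gamma a : ℂ) := by
  set μ : Measure ℝ :=
    (volume.restrict (Ioi (0 : ℝ))).withDensity (fun x => ENNReal.ofReal (x ^ (a - 1))) with hμ
  have hmeas : Measurable (fun x : ℝ => ENNReal.ofReal (x ^ (a - 1))) := by fun_prop
  have hfin : ∀ᵐ x ∂(volume.restrict (Ioi (0 : ℝ))), ENNReal.ofReal (x ^ (a - 1)) < ⊤ :=
    .of_forall fun _ => ENNReal.ofReal_lt_top
  have hmgf : ∀ z : ℂ, ProbabilityTheory.complexMGF id μ z
      = ∫ x in Ioi (0 : ℝ), ((x ^ (a - 1) : ℝ) : ℂ) * Complex.exp (z * x) := by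
    intro z
    rw [ProbabilityTheory.complexMGF, hμ, integral_withDensity_eq_integral_toReal_smul hmeas hfin]
    refine setIntegral_congr_fun measurableSet_Ioi fun x hx => ?_
    have hx' : 0 ≤ x ^ (a - 1) := Real.rpow_nonneg (le_of_lt hx) _
    simp [ENNReal.toReal_ofReal hx']
  have hset : Iio (0 : ℝ) ⊆ interior (ProbabilityTheory.integrableExpSet id μ) := by
    refine interior_maximal (fun t ht => ?_) isOpen_Iio
    have ht' : (0 : ℝ) < -t := by simpa using ht
    change Integrable _ μ
    rw [hμ, integrable_withDensity_iff_integrable_smul' hmeas hfin]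
    have := integrableOn_rpow_mul_exp_neg_mul_rpow (s := a - 1) (by linarith) one_pos ht'
    refine this.congr_fun (fun x hx => ?_) measurableSet_Ioi
    have hx' : 0 ≤ x ^ (a - 1) := Real.rpow_nonneg (le_of_lt hx) _
    simp [ENNReal.toReal_ofReal hx']
  have hL : AnalyticOnNhd ℂ (ProbabilityTheory.complexMGF id μ) {z | z.re < 0} :=
    ProbabilityTheory.analyticOnNhd_complexMGF.mono fun z hz => hset hz
  have hR : AnalyticOnNhd ℂ (fun z : ℂ => (-z) ^ (-(a : ℂ)) * (Real.Gamma a : ℂ))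
      {z | z.re < 0} := by
    refine DifferentiableOn.analyticOnNhd (fun z hz => ?_)
      (isOpen_Iio.preimage Complex.continuous_re)
    refine DifferentiableAt.differentiableWithinAt ?_
    refine DifferentiableAt.mul_const (DifferentiableAt.cpow_const differentiableAt_id.neg
      (Or.inl ?_)) _
    simpa using hz
  have hreal : ∀ t : ℝ, t < 0 → ProbabilityTheory.complexMGF id μ (t : ℂ)
      = (-(t : ℂ)) ^ (-(a : ℂ)) * (Real.Gamma a : ℂ) := by
    intro t ht
    have ht' : 0 < -t := by linarith
    have h := Real.integral_rpow_mul_exp_neg_mul_Ioi ha ht'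
    rw [hmgf]
    have e : ∀ x : ℝ, ((x ^ (a - 1) : ℝ) : ℂ) * Complex.exp (t * x)
        = ((x ^ (a - 1) * Real.exp (-(-t * x)) : ℝ) : ℂ) := by
      intro x; push_cast; simp
    simp_rw [e]
    rw [integral_complex_ofReal, h, one_div, Real.inv_rpow ht'.le, ← Real.rpow_neg ht'.le]
    push_cast [Complex.ofReal_cpow ht'.le]
    rfl
  have hfreq : ∃ᶠ z in 𝓝[≠] ((-1 : ℝ) : ℂ), ProbabilityTheory.complexMGF id μ z
      = (-z) ^ (-(a : ℂ)) * (Real.Gamma a : ℂ) := by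
    have ht : Tendsto (fun t : ℝ => (t : ℂ)) (𝓝[≠] (-1 : ℝ)) (𝓝[≠] ((-1 : ℝ) : ℂ)) := by
      refine tendsto_nhdsWithin_of_tendsto_nhds_of_eventually_within _
        (Complex.continuous_ofReal.continuousAt.tendsto.mono_left nhdsWithin_le_nhds) ?_
      filter_upwards [self_mem_nhdsWithin] with t ht h
      exact ht (by simpa using! congrArg Complex.re h)
    refine ht.frequently (Eventually.frequently ?_)
    filter_upwards [nhdsWithin_le_nhds (Iio_mem_nhds (by norm_num : (-1 : ℝ) < 0))] with t ht
    exact hreal t ht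
  have hpre : IsPreconnected {z : ℂ | z.re < 0} := (convex_halfSpace_re_lt 0).isPreconnected
  have key := hL.eqOn_of_preconnected_of_frequently_eq hR hpre (by simp) hfreq
  have := key (show (-s) ∈ {z : ℂ | z.re < 0} by simpa using hs)
  rw [hmgf] at this
  simpa using! this

/-! ### Laplace's inversion integral -/

lemma one_add_mul_I_ne_zero (t : ℝ) : (1 : ℂ) + t * Complex.I ≠ 0 := by
  intro h
  simpa using congrArg Complex.re h

lemma norm_one_add_mul_I_sq (t : ℝ) : ‖(1 : ℂ) + t * Complex.I‖ ^ 2 = 1 + t ^ 2 := by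
  rw [← Complex.normSq_eq_norm_sq]; simp [Complex.normSq_apply]; ring

lemma continuous_one_add_mul_I_cpow (a : ℂ) :
    Continuous fun t : ℝ => ((1 : ℂ) + t * Complex.I) ^ a :=
  Continuous.cpow (by fun_prop) continuous_const fun t => Or.inl (by simp)

lemma integrable_one_add_mul_I_cpow {a : ℝ} (ha : 1 < a) :
    Integrable fun t : ℝ => ((1 : ℂ) + t * Complex.I) ^ (-(a : ℂ)) := by
  have h := integrable_rpow_neg_one_add_norm_sq (E := ℝ) (μ := volume) (r := a) (by simpa using ha)
  refine h.mono' (continuous_one_add_mul_I_cpow _).aestronglyMeasurable (.of_forall fun t => ?_)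
  rw [← Complex.ofReal_neg, Complex.norm_cpow_real, Real.norm_eq_abs, sq_abs,
    ← norm_one_add_mul_I_sq, ← Real.rpow_natCast, ← Real.rpow_mul (norm_nonneg _)]
  apply le_of_eq; congr 1; push_cast; ring

/-- The unnormalised Gamma density `x ^ (a - 1) * exp (-x)` on `(0, ∞)`, extended by zero to `ℝ`.
The extension uses `0 ^ (a - 1) = 0`, which holds for `a ≠ 1`. -/
def gammaDensity (a x : ℝ) : ℂ := (((max x 0) ^ (a - 1) * Real.exp (-x) : ℝ) : ℂ)

lemma gammaDensity_of_nonpos {a : ℝ} (ha : 1 < a) {x : ℝ} (hx : x ≤ 0) :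
    gammaDensity a x = 0 := by
  rw [gammaDensity, max_eq_right hx, Real.zero_rpow (by linarith)]; simp

lemma gammaDensity_of_pos {a x : ℝ} (hx : 0 < x) :
    gammaDensity a x = ((x ^ (a - 1) * Real.exp (-x) : ℝ) : ℂ) := by
  rw [gammaDensity, max_eq_left hx.le]

lemma gammaDensity_eq_indicator {a : ℝ} (ha : 1 < a) :
    gammaDensity a
      = (Ioi (0 : ℝ)).indicator fun x => ((x ^ (a - 1) * Real.exp (-x) : ℝ) : ℂ) := by
  ext x
  by_cases hx : 0 < x
  · simp only [indicator_of_mem (show x ∈ Ioi (0 : ℝ) from hx), gammaDensity_of_pos hx]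
  · rw [indicator_of_notMem (show x ∉ Ioi (0 : ℝ) from hx),
      gammaDensity_of_nonpos ha (not_lt.mp hx)]

lemma continuous_gammaDensity {a : ℝ} (ha : 1 < a) : Continuous (gammaDensity a) := by
  unfold gammaDensity
  refine Complex.continuous_ofReal.comp (Continuous.mul ?_ (by fun_prop))
  exact (continuous_id.max continuous_const).rpow_const fun x => Or.inr (by linarith)

lemma integrable_gammaDensity {a : ℝ} (ha : 1 < a) : Integrable (gammaDensity a) := by
  rw [gammaDensity_eq_indicator ha, integrable_indicator_iff measurableSet_Ioi]
  refine Integrable.ofReal ?_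
  refine (Real.GammaIntegral_convergent (s := a) (by linarith)).congr_fun (fun x _ => ?_)
    measurableSet_Ioi
  exact mul_comm _ _

lemma fourier_gammaDensity {a : ℝ} (ha : 1 < a) (w : ℝ) :
    FourierTransform.fourier (gammaDensity a) w
      = ((1 : ℂ) + ((2 * π * w : ℝ) : ℂ) * Complex.I) ^ (-(a : ℂ)) * (Real.Gamma a : ℂ) := by
  rw [Real.fourier_real_eq_integral_exp_smul, ← integral_rpow_mul_cexp_neg_mul_Ioi (by linarith)
    (by simp), ← integral_indicator measurableSet_Ioi]
  congr 1
  ext x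
  by_cases hx : 0 < x
  · have hexp : ((Real.exp (-x) : ℝ) : ℂ) = Complex.exp (-x) := by push_cast; rfl
    rw [indicator_of_mem (show x ∈ Ioi (0 : ℝ) from hx), gammaDensity_of_pos hx, smul_eq_mul,
      Complex.ofReal_mul (x ^ (a - 1)), hexp, mul_left_comm, ← Complex.exp_add]
    congr 2; push_cast; ring
  · rw [indicator_of_notMem (show x ∉ Ioi (0 : ℝ) from hx),
      gammaDensity_of_nonpos ha (not_lt.mp hx), smul_zero]

/-- Laplace's inversion integral `∫_{Re s = 1} s ^ (-a) e ^ (B s) ds = 2 π i B ^ (a - 1) / Γ(a)`,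
stated with `s = 1 + i t`, and valid for every real `B` when the right side is read as zero for
`B ≤ 0`. It is Fourier inversion for the Gamma density. -/
lemma integral_cpow_mul_cexp_vertical {a : ℝ} (ha : 1 < a) (B : ℝ) :
    ∫ t : ℝ, ((1 : ℂ) + t * Complex.I) ^ (-(a : ℂ)) * Complex.exp (B * (1 + t * Complex.I))
      = ((2 * π * (max B 0) ^ (a - 1) / Real.Gamma a : ℝ) : ℂ) := by
  have hΓ : Real.Gamma a ≠ 0 := (Real.Gamma_pos_of_pos (by linarith)).ne'
  have hfou : FourierTransform.fourier (gammaDensity a)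
      = fun w : ℝ => (fun t : ℝ => ((1 : ℂ) + t * Complex.I) ^ (-(a : ℂ))) (2 * π * w)
        * (Real.Gamma a : ℂ) := funext fun w => fourier_gammaDensity ha w
  have hint : Integrable (FourierTransform.fourier (gammaDensity a)) := by
    rw [hfou]
    exact ((integrable_one_add_mul_I_cpow ha).comp_mul_left' (by positivity)).mul_const _
  have hinv := congrFun ((continuous_gammaDensity ha).fourierInv_fourier_eq
    (integrable_gammaDensity ha) hint) B
  rw [Real.fourierInv_eq', hfou] at hinv
  have hsub := Measure.integral_comp_mul_left (fun t : ℝ => ((1 : ℂ) + t * Complex.I) ^ (-(a : ℂ))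
    * Complex.exp (B * (1 + t * Complex.I))) (2 * π)
  have hpi : (0 : ℝ) < 2 * π := by positivity
  have hpiC : (π : ℂ) ≠ 0 := by exact_mod_cast Real.pi_ne_zero
  have hΓC : (Real.Gamma a : ℂ) ≠ 0 := by exact_mod_cast hΓ
  have e : ∀ w : ℝ, ((1 : ℂ) + ((2 * π * w : ℝ) : ℂ) * Complex.I) ^ (-(a : ℂ))
        * Complex.exp (B * (1 + ((2 * π * w : ℝ) : ℂ) * Complex.I))
      = (Complex.exp B / Real.Gamma a) * (Complex.exp (((2 * π * inner ℝ w B : ℝ) : ℂ) * Complex.I)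
        • ((fun t : ℝ => ((1 : ℂ) + t * Complex.I) ^ (-(a : ℂ))) (2 * π * w)
          * (Real.Gamma a : ℂ))) := by
    intro w
    have : Complex.exp (B * (1 + ((2 * π * w : ℝ) : ℂ) * Complex.I))
        = Complex.exp B * Complex.exp (((2 * π * inner ℝ w B : ℝ) : ℂ) * Complex.I) := by
      rw [← Complex.exp_add]; congr 1; simp; ring
    rw [this, smul_eq_mul]
    field_simp
  simp_rw [e] at hsub
  rw [integral_const_mul, hinv, abs_of_pos (inv_pos.mpr hpi), Complex.real_smul] at hsub
  have h2 : ∀ y : ℂ, ((2 * π)⁻¹ : ℝ) * y = Complex.exp B / Real.Gamma a * gammaDensity a B →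
      y = 2 * π * (Complex.exp B / Real.Gamma a * gammaDensity a B) := by
    intro y hy; rw [← hy]; push_cast; field_simp
  rw [h2 _ hsub.symm, gammaDensity]
  have h3 : Complex.exp B * Complex.exp (-B) = 1 := by rw [← Complex.exp_add]; simp
  push_cast
  linear_combination (2 * π / Real.Gamma a * (((max B 0) ^ (a - 1) : ℝ) : ℂ)) * h3

/-! ### Termwise integration along the vertical line -/

lemma one_le_norm_one_add_mul_I (t : ℝ) : 1 ≤ ‖(1 : ℂ) + t * Complex.I‖ := by
  have := norm_one_add_mul_I_sq t
  nlinarith [norm_nonneg ((1 : ℂ) + t * Complex.I), sq_nonneg t]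

/-- Expanding `e ^ (A / s)` in powers of `1 / s` and integrating term by term along `Re s = 1`.
The terms vanish for `B ≤ 0`, where `max B 0 = 0` has positive exponent. -/
lemma hasSum_integral_vertical {ν : ℝ} (hν : 0 < ν) (A B : ℝ) :
    HasSum (fun j : ℕ => ((A ^ j / (j.factorial : ℝ) *
        (2 * π * (max B 0) ^ (ν + j) / Real.Gamma (j + ν + 1)) : ℝ) : ℂ))
      (∫ t : ℝ, ((1 : ℂ) + t * Complex.I) ^ (-((ν + 1 : ℝ) : ℂ)) *
        Complex.exp (A / (1 + t * Complex.I) + B * (1 + t * Complex.I))) := by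
  set F : ℕ → ℝ → ℂ := fun j t => ((A ^ j / (j.factorial : ℝ) : ℝ) : ℂ) *
    (((1 : ℂ) + t * Complex.I) ^ (-((ν + 1 + j : ℝ) : ℂ)) * Complex.exp (B * (1 + t * Complex.I)))
    with hF
  have hterm : ∀ j : ℕ, ∫ t, F j t = ((A ^ j / (j.factorial : ℝ) *
        (2 * π * (max B 0) ^ (ν + j) / Real.Gamma (j + ν + 1)) : ℝ) : ℂ) := by
    intro j
    have hj : (0 : ℝ) ≤ j := j.cast_nonneg
    rw [hF, integral_const_mul, integral_cpow_mul_cexp_vertical (by linarith), Complex.ofReal_mul,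
      show ν + 1 + (j : ℝ) - 1 = ν + j by ring, show ν + 1 + (j : ℝ) = j + ν + 1 by ring]
  have hpow : ∀ (j : ℕ) (t : ℝ), ((1 : ℂ) + t * Complex.I) ^ (-((ν + 1 + j : ℝ) : ℂ))
      = ((1 : ℂ) + t * Complex.I) ^ (-((ν + 1 : ℝ) : ℂ)) * ((1 + t * Complex.I) ^ j)⁻¹ := by
    intro j t
    rw [← Complex.cpow_natCast, ← Complex.cpow_neg,
      ← Complex.cpow_add _ _ (one_add_mul_I_ne_zero t)]
    congr 1; push_cast; ring
  have hnexp : ∀ t : ℝ, ‖Complex.exp (B * (1 + t * Complex.I))‖ = Real.exp B := by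
    intro t; rw [Complex.norm_exp]; simp
  have hg := (integrable_one_add_mul_I_cpow (a := ν + 1) (by linarith)).norm
  simp_rw [← hterm]
  refine hasSum_integral_of_dominated_convergence
    (fun j t => |A| ^ j / (j.factorial : ℝ) *
      (‖((1 : ℂ) + t * Complex.I) ^ (-((ν + 1 : ℝ) : ℂ))‖ * Real.exp B))
    (fun j => ?_) (fun j => .of_forall fun t => ?_) (.of_forall fun t => ?_) ?_
    (.of_forall fun t => ?_)
  · exact (continuous_const.mul ((continuous_one_add_mul_I_cpow _).mul
      (by fun_prop))).aestronglyMeasurable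
  · simp only [hF, norm_mul, hnexp, hpow, norm_inv, norm_pow, Complex.norm_real, Real.norm_eq_abs,
      abs_div, abs_pow, Nat.abs_cast]
    have h1 : (‖(1 : ℂ) + t * Complex.I‖ ^ j)⁻¹ ≤ 1 :=
      inv_le_one_of_one_le₀ (one_le_pow₀ (one_le_norm_one_add_mul_I t))
    gcongr
    exact mul_le_of_le_one_right (norm_nonneg _) h1
  · exact (Real.summable_pow_div_factorial _).mul_right _
  · simp_rw [tsum_mul_right]
    exact (hg.mul_const _).const_mul _
  · have h := NormedSpace.expSeries_div_hasSum_exp ((A : ℂ) / (1 + t * Complex.I))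
    rw [← Complex.exp_eq_exp_ℂ] at h
    have h2 := h.mul_right (((1 : ℂ) + t * Complex.I) ^ (-((ν + 1 : ℝ) : ℂ)) *
      Complex.exp (B * (1 + t * Complex.I)))
    have e1 : (fun j => F j t) = fun j : ℕ => ((A : ℂ) / (1 + t * Complex.I)) ^ j / (j.factorial : ℂ)
        * (((1 : ℂ) + t * Complex.I) ^ (-((ν + 1 : ℝ) : ℂ)) *
          Complex.exp (B * (1 + t * Complex.I))) := by
      ext j
      simp only [hF, hpow]
      rw [div_pow, Complex.ofReal_div, Complex.ofReal_pow, Complex.ofReal_natCast]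
      ring
    rw [e1, Complex.exp_add, mul_left_comm]
    exact h2

/-! ### From the circle to the line -/

/-- The point `z = 1/2 + e ^ (-iθ) / 2` of the circle with `θ = 2 arctan t` is `1 / (1 + i t)`. -/
lemma circle_point_two_arctan (t : ℝ) :
    (1 / 2 + (1 / 2) * Complex.exp (-Complex.I * ((2 * Real.arctan t : ℝ) : ℂ)))
      = ((1 : ℂ) + t * Complex.I)⁻¹ := by
  have hs := one_add_mul_I_ne_zero t
  have hq : 0 < 1 + t ^ 2 := by positivity
  have hr : Real.sqrt (1 + t ^ 2) ≠ 0 := (Real.sqrt_pos.mpr hq).ne'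
  have hrC : (Real.sqrt (1 + t ^ 2) : ℂ) ≠ 0 := by exact_mod_cast hr
  have hsq : (Real.sqrt (1 + t ^ 2) : ℂ) ^ 2 = 1 + (t : ℂ) ^ 2 := by
    exact_mod_cast Real.sq_sqrt hq.le
  have e : Complex.exp (-Complex.I * ((2 * Real.arctan t : ℝ) : ℂ))
      = (((1 : ℂ) - t * Complex.I) / Real.sqrt (1 + t ^ 2)) ^ 2 := by
    have h1 : Complex.exp (((-Real.arctan t : ℝ) : ℂ) * Complex.I)
        = ((1 : ℂ) - t * Complex.I) / Real.sqrt (1 + t ^ 2) := by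
      rw [Complex.exp_mul_I, ← Complex.ofReal_cos, ← Complex.ofReal_sin, Real.cos_neg,
        Real.sin_neg, Real.cos_arctan, Real.sin_arctan]
      push_cast; field_simp; ring
    rw [← h1, ← Complex.exp_nat_mul]
    congr 1; push_cast; ring
  rw [e, div_pow, hsq]
  have hf : (1 : ℂ) + (t : ℂ) ^ 2 = (1 + t * Complex.I) * (1 - t * Complex.I) := by
    linear_combination ((t : ℂ) ^ 2) * Complex.I_sq
  have hne : (1 : ℂ) + (t : ℂ) ^ 2 ≠ 0 := by rw [← hsq]; exact pow_ne_zero _ hrC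
  have hs' : (1 : ℂ) - t * Complex.I ≠ 0 := by
    intro h; rw [hf, h, mul_zero] at hne; exact hne rfl
  rw [hf]
  field_simp
  ring

/-- The inversion `z = 1 / s` turns the circle `|z - 1/2| = 1/2` into the line `Re s = 1`. The
point `z = 0` of the circle corresponds to `s = ∞`, and is lost as a null set. -/
lemma circle_integral_eq_vertical (c A B : ℝ) :
    (∫ θ in (0 : ℝ)..(2 * π),
        (1 / 2 + (1 / 2) * Complex.exp (-Complex.I * θ)) ^ (c : ℂ) *
          Complex.exp (A * (1 / 2 + (1 / 2) * Complex.exp (-Complex.I * θ)) +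
            B / (1 / 2 + (1 / 2) * Complex.exp (-Complex.I * θ))) *
          (-(Complex.I / 2) * Complex.exp (-Complex.I * θ)))
      = -Complex.I * ∫ t : ℝ, ((1 : ℂ) + t * Complex.I) ^ (-((c + 1 + 1 : ℝ) : ℂ)) *
        Complex.exp (A / (1 + t * Complex.I) + B * (1 + t * Complex.I)) := by
  set g : ℝ → ℂ := fun θ =>
    (1 / 2 + (1 / 2) * Complex.exp (-Complex.I * θ)) ^ (c : ℂ) *
          Complex.exp (A * (1 / 2 + (1 / 2) * Complex.exp (-Complex.I * θ)) +
            B / (1 / 2 + (1 / 2) * Complex.exp (-Complex.I * θ))) *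
          (-(Complex.I / 2) * Complex.exp (-Complex.I * θ)) with hg
  have hper : Function.Periodic g (2 * π) := by
    intro θ
    have : Complex.exp (-Complex.I * ((θ + 2 * π : ℝ) : ℂ)) = Complex.exp (-Complex.I * θ) := by
      rw [← Complex.exp_periodic.sub_eq (-Complex.I * θ)]
      congr 1; push_cast; ring
    simp only [hg, this]
  have hshift := hper.intervalIntegral_add_eq 0 (-π)
  rw [zero_add, show -π + 2 * π = π by ring] at hshift
  have himg : (fun t : ℝ => 2 * Real.arctan t) '' univ = Ioo (-π) π := by
    ext x
    simp only [image_univ, mem_range, mem_Ioo]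
    constructor
    · rintro ⟨t, rfl⟩
      constructor <;> linarith [Real.neg_pi_div_two_lt_arctan t, Real.arctan_lt_pi_div_two t]
    · rintro ⟨h1, h2⟩
      exact ⟨Real.tan (x / 2), by rw [Real.arctan_tan] <;> linarith⟩
  have hcov := integral_image_eq_integral_abs_deriv_smul (s := univ)
    (f := fun t : ℝ => 2 * Real.arctan t) (f' := fun t => 2 * (1 / (1 + t ^ 2)))
    MeasurableSet.univ (fun t _ => ((Real.hasDerivAt_arctan t).const_mul 2).hasDerivWithinAt)
    (fun x _ y _ h => Real.arctan_injective (by simpa using h)) g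
  rw [himg, setIntegral_univ] at hcov
  rw [hshift, intervalIntegral.integral_of_le (by linarith [Real.pi_pos]),
    integral_Ioc_eq_integral_Ioo, hcov, ← integral_const_mul]
  congr 1
  ext t
  have hs := one_add_mul_I_ne_zero t
  have hz := circle_point_two_arctan t
  have hexp : Complex.exp (-Complex.I * ((2 * Real.arctan t : ℝ) : ℂ))
      = 2 * ((1 : ℂ) + t * Complex.I)⁻¹ - 1 := by rw [← hz]; ring
  have habs : |2 * (1 / (1 + t ^ 2))| = 2 * (1 / (1 + t ^ 2)) := abs_of_pos (by positivity)
  have hf : (1 : ℂ) + (t : ℂ) ^ 2 = (1 + t * Complex.I) * (1 - t * Complex.I) := by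
    linear_combination ((t : ℂ) ^ 2) * Complex.I_sq
  have hne : (1 : ℂ) + (t : ℂ) ^ 2 ≠ 0 := by
    exact_mod_cast (by positivity : (1 : ℝ) + t ^ 2 ≠ 0)
  have hs' : (1 : ℂ) - t * Complex.I ≠ 0 := by
    intro h; rw [hf, h, mul_zero] at hne; exact hne rfl
  have harg : ((1 : ℂ) + t * Complex.I).arg ≠ π := by
    intro h
    have := (Complex.arg_eq_pi_iff.mp h).1
    simp at this
    linarith
  have hcpow : ((1 : ℂ) + t * Complex.I) ^ (-((c + 1 + 1 : ℝ) : ℂ))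
      = (((1 : ℂ) + t * Complex.I) ^ (c : ℂ))⁻¹ * ((1 + t * Complex.I) ^ 2)⁻¹ := by
    rw [← Complex.cpow_natCast, ← Complex.cpow_neg, ← Complex.cpow_neg,
      ← Complex.cpow_add _ _ hs]
    congr 1; push_cast; ring
  simp only [hg]
  rw [hz, hexp, habs, hcpow, Complex.inv_cpow _ _ harg, Complex.real_smul, div_inv_eq_mul,
    ← div_eq_mul_inv]
  have hjac : ((2 * (1 / (1 + t ^ 2)) : ℝ) : ℂ)
        * (-(Complex.I / 2) * (2 * ((1 : ℂ) + t * Complex.I)⁻¹ - 1))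
      = -Complex.I * ((1 + t * Complex.I) ^ 2)⁻¹ := by
    push_cast
    rw [hf]
    field_simp
    ring
  linear_combination ((((1 : ℂ) + t * Complex.I) ^ (c : ℂ))⁻¹ *
    Complex.exp (A / (1 + t * Complex.I) + B * (1 + t * Complex.I))) * hjac

/-! ### The Bessel series -/

/-- Matching the series with that of the Bessel function: with `x = 2 √(A B)`, each term of
`(B / A) ^ (ν / 2) I_ν(x)` is `A ^ j B ^ (ν + j) / (j! Γ(j + ν + 1))`. -/
lemma bessel_term {A B ν : ℝ} (hA : 0 < A) (hB : 0 < B) (j : ℕ) :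
    Real.sqrt (B / A) ^ ν * ((2 * Real.sqrt (A * B) / 2) ^ (2 * (j : ℝ) + ν) /
        (Real.Gamma (j + ν + 1) * (j.factorial : ℝ)))
      = A ^ j / (j.factorial : ℝ) * (B ^ (ν + j) / Real.Gamma (j + ν + 1)) := by
  have h : Real.sqrt (B / A) ^ ν * (2 * Real.sqrt (A * B) / 2) ^ (2 * (j : ℝ) + ν)
      = A ^ j * B ^ (ν + j) := by
    have h1 : Real.sqrt (B / A) * Real.sqrt (A * B) = B := by
      rw [← Real.sqrt_mul (by positivity), show B / A * (A * B) = B ^ 2 by field_simp,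
        Real.sqrt_sq hB.le]
    rw [mul_div_cancel_left₀ _ (two_ne_zero), Real.rpow_add (by positivity), mul_left_comm,
      ← Real.mul_rpow (by positivity) (by positivity), h1, Real.rpow_mul (by positivity),
      Real.rpow_two, Real.sq_sqrt (by positivity), Real.rpow_natCast, mul_pow,
      Real.rpow_add hB, Real.rpow_natCast]
    ring
  rw [mul_div_assoc', h, div_mul_div_comm]
  ring_nf

/-- **Lemma (evaluation of the circle integral).**  Let `c₁ > 0`, `n > n₀`, `k ≥ 1`, `c₃ₖ ∈ ℝ`,
and let `I` be the integral of `z^{c₁} exp(2π(n-n₀)z/k² + (π/12)c₃ₖ/z)` over the circle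
`|z - 1/2| = 1/2` traversed clockwise (parametrized by `z(θ) = 1/2 + (1/2)e^{-iθ}`,
`θ ∈ [0, 2π]`, with `z^{c₁}` the principal branch).  If `c₃ₖ ≤ 0` then `I = 0`, and if
`c₃ₖ > 0` then `I = -2πi (k√(c₃ₖ/(24(n-n₀))))^{c₁+1} I_{1+c₁}((π/k)√((2/3)c₃ₖ(n-n₀)))`. -/
theorem circle_integral_eval
    (c₁ : ℝ) (hc₁ : 0 < c₁) (n n₀ : ℝ) (hn : n₀ < n) (k : ℕ) (hk : 1 ≤ k) (c₃k : ℝ) :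
    (c₃k ≤ 0 →
      (∫ θ in (0 : ℝ)..(2 * π),
        (1 / 2 + (1 / 2) * Complex.exp (-Complex.I * θ)) ^ ((c₁ : ℂ)) *
          Complex.exp (((2 * π * (n - n₀) : ℝ) : ℂ) *
              (1 / 2 + (1 / 2) * Complex.exp (-Complex.I * θ)) / (k : ℂ) ^ 2 +
            ((π / 12 * c₃k : ℝ) : ℂ) / (1 / 2 + (1 / 2) * Complex.exp (-Complex.I * θ))) *
          (-(Complex.I / 2) * Complex.exp (-Complex.I * θ))) = 0) ∧
    (0 < c₃k →
      (∫ θ in (0 : ℝ)..(2 * π),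
        (1 / 2 + (1 / 2) * Complex.exp (-Complex.I * θ)) ^ ((c₁ : ℂ)) *
          Complex.exp (((2 * π * (n - n₀) : ℝ) : ℂ) *
              (1 / 2 + (1 / 2) * Complex.exp (-Complex.I * θ)) / (k : ℂ) ^ 2 +
            ((π / 12 * c₃k : ℝ) : ℂ) / (1 / 2 + (1 / 2) * Complex.exp (-Complex.I * θ))) *
          (-(Complex.I / 2) * Complex.exp (-Complex.I * θ)))
        = -2 * π * Complex.I *
            ((((k : ℝ) * Real.sqrt (c₃k / (24 * (n - n₀)))) ^ (c₁ + 1) : ℝ) : ℂ) *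
            ((besselI (1 + c₁) (π / k * Real.sqrt (2 / 3 * c₃k * (n - n₀))) : ℝ) : ℂ)) := by
  have hkR : (0 : ℝ) < k := by exact_mod_cast hk
  have hd : 0 < n - n₀ := sub_pos.mpr hn
  set A : ℝ := 2 * π * (n - n₀) / (k : ℝ) ^ 2 with hAdef
  have hA : 0 < A := by positivity
  have hint := circle_integral_eq_vertical c₁ A (π / 12 * c₃k)
  have hcast : ∀ z : ℂ, ((2 * π * (n - n₀) : ℝ) : ℂ) * z / (k : ℂ) ^ 2 = (A : ℂ) * z := by
    intro z; rw [hAdef]; push_cast; ring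
  simp_rw [hcast, hint]
  have hsum := hasSum_integral_vertical (ν := c₁ + 1) (by linarith) A (π / 12 * c₃k)
  constructor
  · intro hc
    have hB : π / 12 * c₃k ≤ 0 := mul_nonpos_of_nonneg_of_nonpos (by positivity) hc
    have hzero : ∀ j : ℕ, (max (π / 12 * c₃k) 0) ^ (c₁ + 1 + j) = (0 : ℝ) := by
      intro j
      rw [max_eq_right hB, Real.zero_rpow (by positivity)]
    simp only [hzero, mul_zero, zero_div, Complex.ofReal_zero] at hsum
    rw [hsum.unique hasSum_zero, mul_zero]
  · intro hc
    set B : ℝ := π / 12 * c₃k with hBdef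
    have hB : 0 < B := by positivity
    have hx : π / k * Real.sqrt (2 / 3 * c₃k * (n - n₀)) = 2 * Real.sqrt (A * B) := by
      rw [← Real.sqrt_sq (show 0 ≤ π / (k : ℝ) by positivity), ← Real.sqrt_mul (by positivity),
        ← Real.sqrt_sq (show (0 : ℝ) ≤ 2 by norm_num), ← Real.sqrt_mul (by positivity)]
      congr 1
      rw [hAdef, hBdef, Real.sqrt_sq (show (0 : ℝ) ≤ 2 by norm_num)]
      field_simp
      ring
    have hpre : (k : ℝ) * Real.sqrt (c₃k / (24 * (n - n₀))) = Real.sqrt (B / A) := by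
      rw [← Real.sqrt_sq hkR.le, ← Real.sqrt_mul (by positivity)]
      congr 1
      rw [hAdef, hBdef]
      field_simp
      ring
    have hbessel : ∑' j : ℕ, A ^ j / (j.factorial : ℝ) *
          (2 * π * (max B 0) ^ (c₁ + 1 + j) / Real.Gamma (j + (c₁ + 1) + 1))
        = 2 * π * (Real.sqrt (B / A) ^ (c₁ + 1) * besselI (1 + c₁) (2 * Real.sqrt (A * B))) := by
      rw [besselI, add_comm 1 c₁, ← tsum_mul_left, ← tsum_mul_left]
      congr 1
      ext j
      rw [bessel_term hA hB, max_eq_left hB.le]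
      ring
    rw [hx, hpre, ← hsum.tsum_eq, ← Complex.ofReal_tsum, hbessel]
    push_cast
    ring
end
end

section
/- Let ν > 1 and x > 0 be real, let L ≥ 1 be an integer and b ∈ {1, …, L}, and set k₀ = b + 1/2. Then Σ_{k > L, k ≡ b (mod L)} I_ν(x/k) ≤ k₀^ν · ζ(ν) · I_ν(x/k₀), where the sum runs over all integers k > L congruent to b modulo L, I_ν is the modified Bessel function of the first kind of order ν, and ζ is the Riemann zeta function. -/
/-!
For `x > 0` the series defining `I_ν(x)` converges because `Γ(j + ν + 1) ≥ 1` makes it dominated by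
an exponential series (`summable_besselI_term`). Replacing the argument `x / k₀` by `x / k` with
`k₀ ≤ k` multiplies the `j`-th term by `(k₀ / k) ^ (2 j + ν) ≤ (k₀ / k) ^ ν`, so
`I_ν(x / k) ≤ (k₀ / k) ^ ν I_ν(x / k₀)` (`besselI_div_le`). Every `k > L` satisfies
`k ≥ b + 1 ≥ k₀`, so summing this bound leaves `∑ k ^ (-ν)` over part of the positive integers,
which is at most `ζ(ν)`; the congruence condition on `k` only makes the sum smaller.
-/

open Real

noncomputable section

theorem besselI_term_nonneg {ν x : ℝ} (hν : 1 < ν) (hx : 0 < x) (j : ℕ) :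
    0 ≤ (x / 2) ^ (2 * (j : ℝ) + ν) / (Real.Gamma (j + ν + 1) * (Nat.factorial j)) := by
  have hG : 0 < Real.Gamma ((j : ℝ) + ν + 1) := Real.Gamma_pos_of_pos (by positivity)
  positivity

theorem summable_besselI_term {ν x : ℝ} (hν : 1 < ν) (hx : 0 < x) :
    Summable fun j : ℕ =>
      (x / 2) ^ (2 * (j : ℝ) + ν) / (Real.Gamma (j + ν + 1) * (Nat.factorial j)) := by
  refine Summable.of_nonneg_of_le (besselI_term_nonneg hν hx) (fun j => ?_)
    ((Real.summable_pow_div_factorial ((x / 2) ^ 2)).mul_left ((x / 2) ^ ν))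
  have hj : (0 : ℝ) ≤ j := Nat.cast_nonneg j
  -- `Γ` increases on `[2, ∞)`, `Γ 2 = 1`, and `j + ν + 1 ≥ 2`.
  have hG : 1 ≤ Real.Gamma ((j : ℝ) + ν + 1) := by
    refine Real.Gamma_two.symm.le.trans ?_
    exact Real.Gamma_strictMonoOn_Ici.monotoneOn (Set.mem_Ici.2 le_rfl)
      (Set.mem_Ici.2 (by linarith)) (by linarith)
  have hf : (0 : ℝ) < Nat.factorial j := by positivity
  have hpow : (x / 2) ^ (2 * (j : ℝ) + ν) = (x / 2) ^ ν * ((x / 2) ^ 2) ^ j := by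
    rw [add_comm, Real.rpow_add (by positivity), ← pow_mul, ← Real.rpow_natCast]
    push_cast
    rfl
  rw [hpow, ← mul_div_assoc]
  apply div_le_div_of_nonneg_left (by positivity) hf
  nlinarith

theorem besselI_div_le {ν x k₀ k : ℝ} (hν : 1 < ν) (hx : 0 < x) (hk₀ : 0 < k₀) (hk : k₀ ≤ k) :
    besselI ν (x / k) ≤ (k₀ / k) ^ ν * besselI ν (x / k₀) := by
  have hkpos : 0 < k := hk₀.trans_le hk
  unfold besselI
  rw [← tsum_mul_left]
  refine (summable_besselI_term hν (by positivity)).tsum_le_tsum (fun j => ?_)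
    ((summable_besselI_term hν (by positivity)).mul_left _)
  have hsplit : x / k / 2 = (k₀ / k) * (x / k₀ / 2) := by field_simp
  rw [hsplit, Real.mul_rpow (by positivity) (by positivity), mul_div_assoc]
  refine mul_le_mul_of_nonneg_right ?_ (besselI_term_nonneg hν (by positivity) j)
  exact Real.rpow_le_rpow_of_exponent_ge (by positivity) ((div_le_one hkpos).2 hk)
    (le_add_of_nonneg_left (by positivity))

theorem riemannZeta_re_eq_tsum {ν : ℝ} (hν : 1 < ν) :
    (riemannZeta (ν : ℂ)).re = ∑' n : ℕ, 1 / (n : ℝ) ^ ν := by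
  have h : riemannZeta (ν : ℂ) = ((∑' n : ℕ, 1 / (n : ℝ) ^ ν : ℝ) : ℂ) := by
    rw [zeta_eq_tsum_one_div_nat_cpow (by simpa using hν), Complex.ofReal_tsum]
    refine tsum_congr fun n => ?_
    rw [Complex.ofReal_div, Complex.ofReal_cpow (Nat.cast_nonneg n)]
    simp
  rw [h, Complex.ofReal_re]

/-- **Lemma.** For real `ν > 1`, `x > 0`, an integer `L ≥ 1`, `b ∈ {1,…,L}`, and
`k₀ = b + 1/2`, the sum of `I_ν(x/k)` over all integers `k > L` with `k ≡ b (mod L)`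
is at most `k₀^ν ζ(ν) I_ν(x/k₀)`, where `ζ` is the Riemann zeta function. -/
theorem besselI_tail_sum_bound
    (ν x : ℝ) (hν : 1 < ν) (hx : 0 < x) (L b : ℕ) (hL : 1 ≤ L) (hb1 : 1 ≤ b) (hbL : b ≤ L) :
    (∑' k : {k : ℕ // L < k ∧ k ≡ b [MOD L]}, besselI ν (x / (k : ℕ)))
      ≤ ((b : ℝ) + 1 / 2) ^ ν * (riemannZeta (ν : ℂ)).re *
          besselI ν (x / ((b : ℝ) + 1 / 2)) := by
  have hk₀ : (0 : ℝ) < (b : ℝ) + 1 / 2 := by positivity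
  set k₀ : ℝ := (b : ℝ) + 1 / 2 with hk₀_def
  have hB : 0 ≤ besselI ν (x / k₀) :=
    tsum_nonneg (besselI_term_nonneg hν (by positivity))
  have hζ : Summable fun n : ℕ => 1 / (n : ℝ) ^ ν := Real.summable_one_div_nat_rpow.2 hν
  have hle : ∀ k : {k : ℕ // L < k ∧ k ≡ b [MOD L]},
      besselI ν (x / (k : ℕ)) ≤ k₀ ^ ν * besselI ν (x / k₀) * (1 / ((k : ℕ) : ℝ) ^ ν) := by
    intro k
    have hbk : (b : ℝ) + 1 ≤ ((k : ℕ) : ℝ) := by exact_mod_cast hbL.trans_lt k.2.1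
    refine (besselI_div_le hν hx hk₀ (by linarith)).trans_eq ?_
    rw [Real.div_rpow hk₀.le (Nat.cast_nonneg _)]
    ring
  have hnonneg : ∀ k : {k : ℕ // L < k ∧ k ≡ b [MOD L]}, 0 ≤ besselI ν (x / (k : ℕ)) := by
    intro k
    have hk : (0 : ℝ) < ((k : ℕ) : ℝ) := by exact_mod_cast (Nat.zero_le L).trans_lt k.2.1
    exact tsum_nonneg (besselI_term_nonneg hν (by positivity))
  have hsub : Summable fun k : {k : ℕ // L < k ∧ k ≡ b [MOD L]} =>
      k₀ ^ ν * besselI ν (x / k₀) * (1 / ((k : ℕ) : ℝ) ^ ν) :=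
    (hζ.comp_injective Subtype.val_injective).mul_left _
  have hpart : (∑' k : {k : ℕ // L < k ∧ k ≡ b [MOD L]}, 1 / ((k : ℕ) : ℝ) ^ ν)
      ≤ ∑' n : ℕ, 1 / (n : ℝ) ^ ν :=
    hζ.tsum_subtype_le _ {k : ℕ | L < k ∧ k ≡ b [MOD L]} (fun n => by positivity)
  calc (∑' k : {k : ℕ // L < k ∧ k ≡ b [MOD L]}, besselI ν (x / (k : ℕ)))
      ≤ ∑' k : {k : ℕ // L < k ∧ k ≡ b [MOD L]},
          k₀ ^ ν * besselI ν (x / k₀) * (1 / ((k : ℕ) : ℝ) ^ ν) :=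
        (Summable.of_nonneg_of_le hnonneg hle hsub).tsum_le_tsum hle hsub
    _ = k₀ ^ ν * besselI ν (x / k₀) *
          ∑' k : {k : ℕ // L < k ∧ k ≡ b [MOD L]}, 1 / ((k : ℕ) : ℝ) ^ ν := tsum_mul_left
    _ ≤ k₀ ^ ν * besselI ν (x / k₀) * ∑' n : ℕ, 1 / (n : ℝ) ^ ν :=
        mul_le_mul_of_nonneg_left hpart (by positivity)
    _ = k₀ ^ ν * (riemannZeta (ν : ℂ)).re * besselI ν (x / k₀) := by
        rw [riemannZeta_re_eq_tsum hν]
        ring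
end
end
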